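/- arXiv:1911.09473 — 10 statements merged into one kernel-verified Lean document; each statement's English description precedes it below -/
import Mathlib

section
/- Let n ≥ 3 be an integer and let (W,R) be a frame such that: (i) there is a world r such that every world of W is reachable from r by the reflexive-transitive closure of R; (ii) every world has at most two R-successors; (iii) every world having an R-predecessor has at most one R-successor; (iv) every world having two distinct R-successors has a dead-end R-successor; (v) r has a dead-end R-successor and there is a dead end e with r R^{n−1} e. Then (W,R) is isomorphic either to the frame F_n, or to the frame C_n whose worlds are pairwise distinct v_1, …, v_n and whose accessibility relation consists exactly of the pairs v_i R v_{i+1} for 1 ≤ i < n together with v_1 R v_n. (An isomorphism of frames is a bijection between the sets of worlds preserving the accessibility relation in both directions.) -/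
/-- `pathRel R k w v` : there is an `R`-path of length exactly `k` from `w` to `v`. -/
def pathRel {W : Type*} (R : W → W → Prop) : ℕ → W → W → Prop
  | 0 => fun w v => w = v
  | k + 1 => fun w v => ∃ u, R w u ∧ pathRel R k u v

/-- A world is a dead end if it sees no world. -/
def DeadEnd {W : Type*} (R : W → W → Prop) (v : W) : Prop := ∀ u, ¬ R v u

/-- The accessibility relation of the frame `F_m`:
worlds are `w_1, …, w_m` (encoded as `Sum.inl i` for `i : Fin m`, `w_{i+1} = Sum.inl i`)
together with `w*` (encoded as `Sum.inr ()`); `w_i R w_{i+1}` for `1 ≤ i < m` and `w_1 R w*`. -/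
def Frel (m : ℕ) : (Fin m ⊕ Unit) → (Fin m ⊕ Unit) → Prop
  | Sum.inl i, Sum.inl j => (j : ℕ) = (i : ℕ) + 1
  | Sum.inl i, Sum.inr _ => (i : ℕ) = 0
  | Sum.inr _, _ => False

/-- The accessibility relation of the frame `C_n`: worlds are `v_1, …, v_n`
(encoded as `Fin n`, `v_{i+1} =` index `i`); `v_i R v_{i+1}` for `1 ≤ i < n` and `v_1 R v_n`. -/
def Crel (n : ℕ) : Fin n → Fin n → Prop :=
  fun i j => (j : ℕ) = (i : ℕ) + 1 ∨ ((i : ℕ) = 0 ∧ (j : ℕ) = n - 1)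

theorem pathRel_fun {W : Type*} (R : W → W → Prop) : ∀ (k : ℕ) (w v : W), pathRel R k w v →
    ∃ f : ℕ → W, f 0 = w ∧ f k = v ∧ ∀ i, i < k → R (f i) (f (i + 1)) := by
  intro k
  induction k with
  | zero =>
    intro w v h
    exact ⟨fun _ => w, rfl, h, fun i hi => absurd hi (by omega)⟩
  | succ k ih =>
    rintro w v ⟨u, hu, h⟩
    obtain ⟨f, h0, hk, hf⟩ := ih u v h
    refine ⟨fun i => Nat.casesOn i w f, rfl, hk, ?_⟩
    intro i hi
    cases i with
    | zero => simpa [h0] using hu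
    | succ i => exact hf i (by omega)

theorem stmt0 {W : Type*} [Nonempty W] (R : W → W → Prop) (n : ℕ) (hn : 3 ≤ n)
    (r : W)
    -- (i) every world is reachable from `r` by the reflexive-transitive closure of `R`
    (hroot : ∀ w : W, Relation.ReflTransGen R r w)
    -- (ii) every world has at most two `R`-successors
    (htwo : ∀ w v₁ v₂ v₃ : W, R w v₁ → R w v₂ → R w v₃ → v₁ = v₂ ∨ v₁ = v₃ ∨ v₂ = v₃)
    -- (iii) every world having an `R`-predecessor has at most one `R`-successor
    (hone : ∀ w : W, (∃ v, R v w) → ∀ u₁ u₂, R w u₁ → R w u₂ → u₁ = u₂)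
    -- (iv) every world having two distinct `R`-successors has a dead-end `R`-successor
    (hde : ∀ w v₁ v₂ : W, R w v₁ → R w v₂ → v₁ ≠ v₂ → ∃ v, R w v ∧ DeadEnd R v)
    -- (v) `r` has a dead-end `R`-successor and sees a dead end in exactly `n - 1` steps
    (hr₁ : ∃ v, R r v ∧ DeadEnd R v)
    (hr₂ : ∃ e, pathRel R (n - 1) r e ∧ DeadEnd R e) :
    (∃ e : W ≃ (Fin n ⊕ Unit), ∀ a b : W, R a b ↔ Frel n (e a) (e b)) ∨
    (∃ e : W ≃ Fin n, ∀ a b : W, R a b ↔ Crel n (e a) (e b)) := by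
  obtain ⟨d, hrd, hd⟩ := hr₁
  obtain ⟨e, hp, he⟩ := hr₂
  obtain ⟨f, h0, hk, hf⟩ := pathRel_fun R _ _ _ hp
  have h1d : f 1 ≠ d := by
    intro h
    exact hd (f 2) (h ▸ hf 1 (by omega))
  have hr1 : R r (f 1) := h0 ▸ hf 0 (by omega)
  have hS : ∀ i, i < n → ∀ w, R (f i) w ↔ (i + 1 < n ∧ w = f (i + 1)) ∨ (i = 0 ∧ w = d) := by
    intro i hi w
    constructor
    · intro h
      rcases Nat.eq_zero_or_pos i with rfl | hpos
      · rw [h0] at h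
        rcases htwo r w (f 1) d h hr1 hrd with h | h | h
        · exact Or.inl ⟨by omega, h⟩
        · exact Or.inr ⟨rfl, h⟩
        · exact absurd h h1d
      · by_cases hl : i + 1 < n
        · have hpr := hf (i - 1) (by omega)
          rw [Nat.sub_add_cancel hpos] at hpr
          exact Or.inl ⟨hl, hone _ ⟨_, hpr⟩ _ _ h (hf i (by omega))⟩
        · have : i = n - 1 := by omega
          subst this
          rw [hk] at h
          exact absurd h (he w)
    · rintro (⟨h, rfl⟩ | ⟨rfl, rfl⟩)
      · exact hf i (by omega)
      · rw [h0]; exact hrd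
  have hlt : ∀ m i j, j + m = n - 1 → i < j → f i ≠ f j := by
    intro m
    induction m with
    | zero =>
      intro i j hj hij h
      have : j = n - 1 := by omega
      subst this
      have := hf i hij
      rw [h, hk] at this
      exact he _ this
    | succ m ih =>
      intro i j hj hij h
      have hpr := hf (j - 1) (by omega)
      rw [Nat.sub_add_cancel (by omega), ← h] at hpr
      rcases Nat.eq_zero_or_pos i with rfl | hpos
      · rw [h0] at hpr
        exact h1d (hone r ⟨_, hpr⟩ _ _ hr1 hrd)
      · have a := hf i (by omega)
        have b := hf j (by omega)
        rw [← h] at b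
        exact ih (i + 1) (j + 1) (by omega) (by omega) (hone _ ⟨_, hpr⟩ _ _ a b)
  have hinj : ∀ i j, i < n → j < n → f i = f j → i = j := by
    intro i j hi hj h
    rcases Nat.lt_trichotomy i j with hl | hl | hl
    · exact absurd h (hlt (n - 1 - j) i j (by omega) hl)
    · exact hl
    · exact absurd h.symm (hlt (n - 1 - i) j i (by omega) hl)
  have hsurj : ∀ w, (∃ i, i < n ∧ f i = w) ∨ d = w := by
    intro w
    induction hroot w with
    | refl => exact Or.inl ⟨0, by omega, h0⟩
    | tail _ hab ih =>
      rcases ih with ⟨i, hi, rfl⟩ | rfl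
      · rcases (hS i hi _).1 hab with ⟨h, rfl⟩ | ⟨_, rfl⟩
        · exact Or.inl ⟨i + 1, h, rfl⟩
        · exact Or.inr rfl
      · exact absurd hab (hd _)
  have hfd : ∀ i, i < n → f i = d → i = n - 1 := by
    intro i hi h
    by_contra hne
    have := hf i (by omega)
    rw [h] at this
    exact hd _ this
  by_cases hed : e = d
  · right
    have hb : Function.Bijective (fun i : Fin n => f i) := by
      constructor
      · intro i j h
        exact Fin.ext (hinj i j i.2 j.2 h)
      · intro w
        rcases hsurj w with ⟨i, hi, h⟩ | h
        · exact ⟨⟨i, hi⟩, h⟩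
        · exact ⟨⟨n - 1, by omega⟩, by rw [← h, ← hed]; exact hk⟩
    refine ⟨(Equiv.ofBijective _ hb).symm, ?_⟩
    intro a b
    obtain ⟨i, rfl⟩ := (Equiv.ofBijective _ hb).surjective a
    obtain ⟨j, rfl⟩ := (Equiv.ofBijective _ hb).surjective b
    rw [Equiv.symm_apply_apply, Equiv.symm_apply_apply]
    simp only [Equiv.ofBijective_apply, Crel]
    rw [hS i i.2]
    constructor
    · rintro (⟨h, h'⟩ | ⟨h, h'⟩)
      · exact Or.inl (hinj _ _ j.2 h h')
      · exact Or.inr ⟨h, hfd _ j.2 h'⟩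
    · rintro (h | ⟨h, h'⟩)
      · exact Or.inl ⟨by omega, by rw [h]⟩
      · exact Or.inr ⟨h, by rw [h', hk, hed]⟩
  · left
    have hnd : ∀ i, i < n → f i ≠ d := by
      intro i hi h
      have := hfd i hi h
      subst this
      exact hed (hk.symm.trans h)
    have hb : Function.Bijective (Sum.elim (fun i : Fin n => f i) (fun _ : Unit => d)) := by
      constructor
      · rintro (i | i) (j | j) h
        · exact congrArg _ (Fin.ext (hinj i j i.2 j.2 h))
        · exact absurd h (hnd i i.2)
        · exact absurd h.symm (hnd j j.2)
        · rfl
      · intro w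
        rcases hsurj w with ⟨i, hi, h⟩ | h
        · exact ⟨Sum.inl ⟨i, hi⟩, h⟩
        · exact ⟨Sum.inr (), h⟩
    refine ⟨(Equiv.ofBijective _ hb).symm, ?_⟩
    intro a b
    obtain ⟨i, rfl⟩ := (Equiv.ofBijective _ hb).surjective a
    obtain ⟨j, rfl⟩ := (Equiv.ofBijective _ hb).surjective b
    rw [Equiv.symm_apply_apply, Equiv.symm_apply_apply]
    rcases i with i | i
    · rcases j with j | j
      · simp only [Equiv.ofBijective_apply, Frel, Sum.elim_inl]
        rw [hS i i.2]
        constructor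
        · rintro (⟨h, h'⟩ | ⟨h, h'⟩)
          · exact hinj _ _ j.2 h h'
          · exact absurd h' (hnd j j.2)
        · intro h
          exact Or.inl ⟨by omega, by rw [h]⟩
      · simp only [Equiv.ofBijective_apply, Frel, Sum.elim_inl, Sum.elim_inr]
        rw [hS i i.2]
        constructor
        · rintro (⟨h, h'⟩ | ⟨h, h'⟩)
          · exact absurd h'.symm (hnd _ h)
          · exact h
        · intro h
          exact Or.inr ⟨h, rfl⟩
    · simp only [Equiv.ofBijective_apply, Frel, Sum.elim_inr, iff_false]
      exact hd _
end

section
/- Let N ≥ 3 be an integer and let (W,R) be a frame such that: (i) every world has at most two R-successors; (ii) every world having two distinct R-successors has a dead-end R-successor; (iii) for every k ≥ 1 and all worlds v, w, if v R^k w and w satisfies condition B_N, then v R^N v; (iv) for every world w satisfying condition B_N and every world v with w R^N v, one has v = w. Suppose some world u_1 of W satisfies condition B_N. Then there exist pairwise distinct worlds u_1, u_2, …, u_N (with u_1 the given world) such that: u_i R u_{i+1} for 1 ≤ i < N and u_N R u_1; the R-successors of u_1 are exactly u_2 and a single dead end; for each i, every R-successor of u_i is either the next world on the cycle (u_{i+1},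 respectively u_1 when i = N) or a dead end; and no world outside {u_1, …, u_N} has an R-successor inside {u_1, …, u_N}. -/
/-- Condition `B_n` at a world `w`: `w` has a dead-end successor; `w` sees in exactly `n`
steps a world having a dead-end successor; and for no `k` with `2 ≤ k ≤ n - 1` does `w` see
in exactly `k` steps a world having a dead-end successor. -/
def CondB {W : Type*} (R : W → W → Prop) (n : ℕ) (w : W) : Prop :=
  (∃ v, R w v ∧ DeadEnd R v) ∧
  (∃ v, pathRel R n w v ∧ ∃ u, R v u ∧ DeadEnd R u) ∧
  (∀ k, 2 ≤ k → k ≤ n - 1 → ¬ ∃ v, pathRel R k w v ∧ ∃ u, R v u ∧ DeadEnd R u)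

theorem pathRel_exists_fun {W : Type*} (R : W → W → Prop) (k : ℕ) : ∀ w v : W,
    pathRel R k w v → ∃ f : ℕ → W, f 0 = w ∧ f k = v ∧ ∀ i, i < k → R (f i) (f (i + 1)) := by
  induction k with
  | zero =>
    intro w v h
    exact ⟨fun _ => w, rfl, h, fun i hi => absurd hi (Nat.not_lt_zero i)⟩
  | succ k ih =>
    rintro w v ⟨x, hx, hp⟩
    obtain ⟨f, h0, hk, hf⟩ := ih x v hp
    refine ⟨fun n => Nat.casesOn n w f, rfl, hk, ?_⟩
    intro i hi
    cases i with
    | zero => simpa [h0] using hx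
    | succ i => exact hf i (by omega)

theorem stmt1 {W : Type*} [Nonempty W] (R : W → W → Prop) (N : ℕ) (hN : 3 ≤ N)
    -- (i) every world has at most two `R`-successors
    (htwo : ∀ w v₁ v₂ v₃ : W, R w v₁ → R w v₂ → R w v₃ → v₁ = v₂ ∨ v₁ = v₃ ∨ v₂ = v₃)
    -- (ii) every world having two distinct `R`-successors has a dead-end `R`-successor
    (hde : ∀ w v₁ v₂ : W, R w v₁ → R w v₂ → v₁ ≠ v₂ → ∃ v, R w v ∧ DeadEnd R v)
    -- (iii) for every `k ≥ 1`, if `v R^k w` and `w` satisfies `B_N`, then `v R^N v`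
    (hdelta : ∀ k, 1 ≤ k → ∀ v w : W, pathRel R k v w → CondB R N w → pathRel R N v v)
    -- (iv) if `w` satisfies `B_N` and `w R^N v`, then `v = w`
    (heps : ∀ w : W, CondB R N w → ∀ v : W, pathRel R N w v → v = w)
    (u₁ : W) (hu₁ : CondB R N u₁) :
    ∃ u : ℕ → W, u 0 = u₁ ∧
      -- `u 0, …, u (N-1)` are pairwise distinct
      (∀ i j, i < N → j < N → u i = u j → i = j) ∧
      -- they form a cycle: `u_i R u_{i+1}` for `1 ≤ i < N` and `u_N R u_1`
      (∀ i, i < N → R (u i) (u ((i + 1) % N))) ∧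
      -- the `R`-successors of `u_1` are exactly `u_2` and a single dead end
      (∃ d : W, DeadEnd R d ∧ d ≠ u 1 ∧ ∀ v : W, R (u 0) v ↔ (v = u 1 ∨ v = d)) ∧
      -- every successor of `u_i` is the next world on the cycle or a dead end
      (∀ i, i < N → ∀ v : W, R (u i) v → v = u ((i + 1) % N) ∨ DeadEnd R v) ∧
      -- no world outside `{u_1, …, u_N}` sees a world inside `{u_1, …, u_N}`
      (∀ v : W, (∀ i, i < N → v ≠ u i) → ∀ i, i < N → ¬ R v (u i)) := by
  have nd : ∀ {x y : W}, R x y → ¬ DeadEnd R x := fun h hd => hd _ h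
  -- non-dead successors are unique
  have uniq : ∀ x a b : W, R x a → R x b → ¬ DeadEnd R a → ¬ DeadEnd R b → a = b := by
    intro x a b ha hb hna hnb
    by_contra hab
    obtain ⟨d, hd, hdd⟩ := hde x a b ha hb hab
    rcases htwo x a b d ha hb hd with h | h | h
    · exact hab h
    · exact hna (h ▸ hdd)
    · exact hnb (h ▸ hdd)
  obtain ⟨⟨d, hRd, hd⟩, ⟨v, hv, _⟩, hno⟩ := id hu₁
  obtain rfl := heps u₁ hu₁ v hv
  obtain ⟨f, hf0, hfN, hf⟩ := pathRel_exists_fun R N v v hv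
  obtain ⟨u, hu⟩ : ∃ u : ℕ → W, ∀ n, u n = f (n % N) := ⟨_, fun _ => rfl⟩
  have hu0 : u 0 = v := by rw [hu, Nat.zero_mod, hf0]
  have hper : ∀ n, u (n % N) = u n := by intro n; rw [hu, hu, Nat.mod_mod]
  have huN : u N = v := by rw [← hper, Nat.mod_self, hu0]
  have step : ∀ n, R (u n) (u (n + 1)) := by
    intro n
    have hr : n % N < N := Nat.mod_lt _ (by omega)
    have h := hf _ hr
    rw [hu, hu]
    by_cases hc : n % N + 1 = N
    · have : (n + 1) % N = 0 := by rw [Nat.add_mod_eq_ite, Nat.mod_eq_of_lt (a := 1) (by omega)]; simp [hc]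
      rw [this, hf0, ← hfN]
      rwa [hc] at h
    · have : (n + 1) % N = n % N + 1 := by
        rw [Nat.add_mod_eq_ite, Nat.mod_eq_of_lt (a := 1) (by omega), if_neg (by omega)]
      rwa [this]
  have path : ∀ k n, pathRel R k (u n) (u (n + k)) := by
    intro k
    induction k with
    | zero => intro n; rfl
    | succ k ih =>
      intro n
      refine ⟨_, step n, ?_⟩
      have := ih (n + 1)
      rwa [show n + 1 + k = n + (k + 1) by omega] at this
  have det : ∀ k n x, pathRel R k (u n) x → ¬ DeadEnd R x → x = u (n + k) := by
    intro k
    induction k with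
    | zero => intro n x h _; exact h.symm
    | succ k ih =>
      rintro n x ⟨y, hy, hp⟩ hx
      have hny : ¬ DeadEnd R y := by
        cases k with
        | zero => exact (show y = x from hp) ▸ hx
        | succ k => obtain ⟨z, hz, _⟩ := hp; exact nd hz
      obtain rfl := uniq _ _ _ hy (step n) hny (nd (step _))
      rw [ih (n + 1) x hp hx, show n + 1 + k = n + (k + 1) by omega]
  have shift : ∀ i j m, u i = u j → u (i + m) = u (j + m) := by
    intro i j m h
    have hp := path m i
    rw [h] at hp
    exact det m j _ hp (nd (step _))
  have nop : ∀ p, 2 ≤ p → p < N → u p ≠ v := by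
    intro p h2 hp h
    refine hno p h2 (by omega) ⟨v, ?_, d, hRd, hd⟩
    have := path p 0
    rwa [Nat.zero_add, h, hu0] at this
  have nop' : ∀ p, 1 ≤ p → p < N → u p ≠ v := by
    intro p h1 hp h
    rcases Nat.lt_or_ge p 2 with h2 | h2
    · obtain rfl : p = 1 := by omega
      have h3 := shift 1 0 1 (h.trans hu0.symm)
      exact nop 2 le_rfl (by omega) (h3.trans h)
    · exact nop p h2 hp h
  have inj : ∀ i j, i < j → j < N → u i ≠ u j := by
    intro i j hij hj h
    have h3 := shift i j (N - j) h
    rw [show j + (N - j) = N by omega, huN] at h3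
    exact nop' (i + (N - j)) (by omega) (by omega) h3
  refine ⟨u, hu0, ?_, ?_, ⟨d, hd, ?_, ?_⟩, ?_, ?_⟩
  · intro i j hi hj h
    rcases Nat.lt_trichotomy i j with hl | hl | hl
    · exact absurd h (inj i j hl hj)
    · exact hl
    · exact absurd h.symm (inj j i hl hi)
  · intro i _
    rw [hper]
    exact step i
  · intro h
    exact nd (step 1) (h ▸ hd)
  · intro x
    constructor
    · intro hx
      rw [hu0] at hx
      have h1 := step 0
      rw [hu0] at h1
      rcases htwo v x (u 1) d hx h1 hRd with h | h | h
      · exact Or.inl h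
      · exact Or.inr h
      · exact absurd hd (h ▸ nd (step 1))
    · rintro (rfl | rfl)
      · exact step 0
      · rwa [hu0]
  · intro i _ x hx
    rw [hper]
    by_cases hxd : DeadEnd R x
    · exact Or.inr hxd
    · exact Or.inl (uniq _ _ _ hx (step i) hxd (nd (step _)))
  · intro x hx i hi hR
    have hp : pathRel R (N - i + 1) x v := by
      refine ⟨u i, hR, ?_⟩
      have := path (N - i) i
      rwa [show i + (N - i) = N by omega, huN] at this
    have hxx := hdelta _ (by omega) x v hp hu₁
    obtain ⟨M, rfl⟩ : ∃ M, N = M + 2 := ⟨N - 2, by omega⟩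
    obtain ⟨y, hy, hq⟩ := hxx
    have hny : ¬ DeadEnd R y := by
      obtain ⟨z, hz, _⟩ := hq
      exact nd hz
    obtain rfl := uniq _ _ _ hy hR hny (nd (step _))
    have h4 := det _ _ _ hq (nd hR)
    rw [← hper] at h4
    exact hx _ (Nat.mod_lt _ (by omega)) h4
end

section
/- For every L-sentence Φ there exists an integer N ≥ 1 such that for all integers m, m' ≥ N, Φ is true in the structure F_m if and only if Φ is true in the structure F_{m'}. -/
open FirstOrder

/-- A frame `(W, R)` regarded as a structure for the first-order language with equality
whose only non-logical symbol is one binary relation symbol (`Language.graph`). -/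
def frameStructure {W : Type*} (R : W → W → Prop) : Language.graph.Structure W where
  RelMap := fun {n} r x => match n, r with
    | 2, .adj => R (x 0) (x 1)


namespace EFGame

/-- Two integer differences agree up to threshold `T`. -/
def Agree (T d e : ℤ) : Prop := d = e ∨ (T < d ∧ T < e) ∨ (d < -T ∧ e < -T)

/-- A finite set of pairs is a partial isomorphism up to threshold `T`. -/
def Inv (T : ℤ) (S : Finset (ℤ × ℤ)) : Prop :=
  ∀ s ∈ S, ∀ t ∈ S, Agree T (s.1 - t.1) (s.2 - t.2)

lemma Inv.mono {T T' : ℤ} (h : T ≤ T') {S : Finset (ℤ × ℤ)} (hS : Inv T' S) : Inv T S := by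
  intro s hs t ht
  have := hS s hs t ht
  unfold Agree at *
  omega

lemma Inv.swap {T : ℤ} {S : Finset (ℤ × ℤ)} (hS : Inv T S) : Inv T (S.image Prod.swap) := by
  intro s hs t ht
  simp only [Finset.mem_image] at hs ht
  obtain ⟨s, hs, rfl⟩ := hs
  obtain ⟨t, ht, rfl⟩ := ht
  have := hS s hs t ht
  simp only [Agree, Prod.fst_swap, Prod.snd_swap] at *
  omega

lemma forth {T : ℤ} (hT : 1 ≤ T) {S : Finset (ℤ × ℤ)} {m m' : ℤ} (h0 : (0, 0) ∈ S)
    (hm : (m, m') ∈ S) (hS : Inv (2 * T + 1) S) (x : ℤ) (hx0 : 0 ≤ x) (hxm : x ≤ m) :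
    ∃ y, 0 ≤ y ∧ y ≤ m' ∧ Inv T (insert (x, y) S) := by
  obtain ⟨l, hl, hlmax⟩ := Finset.exists_max_image (S.filter (fun s => s.1 ≤ x)) Prod.fst
    ⟨(0, 0), by simp [h0, hx0]⟩
  obtain ⟨r, hr, hrmin⟩ := Finset.exists_min_image (S.filter (fun s => x ≤ s.1)) Prod.fst
    ⟨(m, m'), by simp [hm, hxm]⟩
  simp only [Finset.mem_filter] at hl hr hlmax hrmin
  obtain ⟨y, hy⟩ : ∃ y : ℤ, ∀ s ∈ S, Agree T (x - s.1) (y - s.2) := by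
    have key : ∀ s ∈ S, (s.1 ≤ l.1 ∨ r.1 ≤ s.1) := by
      intro s hs
      rcases le_total s.1 x with h | h
      · exact Or.inl (hlmax s ⟨hs, h⟩)
      · exact Or.inr (hrmin s ⟨hs, h⟩)
    have hlr := hS l hl.1 r hr.1
    by_cases c1 : x - l.1 ≤ T
    · refine ⟨l.2 + (x - l.1), fun s hs => ?_⟩
      have h1 := hS s hs l hl.1
      have h2 := hS s hs r hr.1
      have h3 := key s hs
      unfold Agree at *
      omega
    by_cases c2 : r.1 - x ≤ T
    · refine ⟨r.2 - (r.1 - x), fun s hs => ?_⟩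
      have h1 := hS s hs l hl.1
      have h2 := hS s hs r hr.1
      have h3 := key s hs
      unfold Agree at *
      omega
    · refine ⟨l.2 + T + 1, fun s hs => ?_⟩
      have h1 := hS s hs l hl.1
      have h2 := hS s hs r hr.1
      have h3 := key s hs
      unfold Agree at *
      omega
  refine ⟨y, ?_, ?_, ?_⟩
  · have := hy _ h0
    simp only [Agree] at this
    omega
  · have := hy _ hm
    simp only [Agree] at this
    omega
  · intro s hs t ht
    rw [Finset.mem_insert] at hs ht
    rcases hs with rfl | hs <;> rcases ht with rfl | ht
    · left; simp
    · exact hy t ht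
    · have := hy s hs
      simp only [Agree] at *
      omega
    · exact hS.mono (by omega) s hs t ht

lemma back {T : ℤ} (hT : 1 ≤ T) {S : Finset (ℤ × ℤ)} {m m' : ℤ} (h0 : (0, 0) ∈ S)
    (hm : (m, m') ∈ S) (hS : Inv (2 * T + 1) S) (y : ℤ) (hy0 : 0 ≤ y) (hym : y ≤ m') :
    ∃ x, 0 ≤ x ∧ x ≤ m ∧ Inv T (insert (x, y) S) := by
  obtain ⟨x, h1, h2, h3⟩ := forth hT (S := S.image Prod.swap) (m := m') (m' := m)
    (Finset.mem_image.2 ⟨_, h0, rfl⟩) (Finset.mem_image.2 ⟨_, hm, rfl⟩) hS.swap y hy0 hym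
  refine ⟨x, h1, h2, ?_⟩
  have := h3.swap
  rwa [Finset.image_insert, Finset.image_image, Prod.swap_swap_eq, Finset.image_id] at this

/-- Position of a world on the underlying path: `w*` is `0` and `w_i` is `i`. -/
def pos {m : ℕ} : Fin m ⊕ Unit → ℤ
  | Sum.inl i => (i : ℤ) + 1
  | Sum.inr _ => 0

lemma pos_nonneg {m : ℕ} (x : Fin m ⊕ Unit) : 0 ≤ pos x := by
  rcases x with i | u <;> simp only [pos] <;> omega

lemma pos_le {m : ℕ} (x : Fin m ⊕ Unit) : pos x ≤ m := by
  rcases x with i | u <;> simp only [pos] <;> omega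

lemma pos_inj {m : ℕ} (x y : Fin m ⊕ Unit) : x = y ↔ pos x = pos y := by
  rcases x with i | u <;> rcases y with j | v <;> simp [pos, Fin.ext_iff] <;> omega

lemma pos_surj {m : ℕ} (z : ℤ) (h0 : 0 ≤ z) (hm : z ≤ m) : ∃ x : Fin m ⊕ Unit, pos x = z := by
  rcases eq_or_lt_of_le h0 with h | h
  · exact ⟨Sum.inr (), by simpa [pos] using h⟩
  · exact ⟨Sum.inl ⟨(z - 1).toNat, by omega⟩, by simp only [pos]; omega⟩

lemma Frel_iff {m : ℕ} (x y : Fin m ⊕ Unit) :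
    Frel m x y ↔ (1 ≤ pos x ∧ pos y = pos x + 1) ∨ (pos x = 1 ∧ pos y = 0) := by
  rcases x with i | u <;> rcases y with j | v <;> simp [Frel, pos] <;> omega

lemma term_eq {n : ℕ} (t : Language.graph.Term (Empty ⊕ Fin n)) :
    ∃ i, t = Language.Term.var (Sum.inr i) := by
  cases t with
  | var a => rcases a with a | i
             · exact a.elim
             · exact ⟨i, rfl⟩
  | func f _ => exact isEmptyElim f

lemma main {n : ℕ} (φ : Language.graph.BoundedFormula Empty n) :
    ∃ T : ℤ, 1 ≤ T ∧ ∀ (m m' : ℕ) (v : Empty → Fin m ⊕ Unit) (v' : Empty → Fin m' ⊕ Unit)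
      (xs : Fin n → Fin m ⊕ Unit) (ys : Fin n → Fin m' ⊕ Unit)
      (S : Finset (ℤ × ℤ)), (0, 0) ∈ S → ((m : ℤ), (m' : ℤ)) ∈ S →
      (∀ i, (pos (xs i), pos (ys i)) ∈ S) → Inv T S →
      (@Language.BoundedFormula.Realize Language.graph _ (frameStructure (Frel m)) _ _ φ v xs ↔
       @Language.BoundedFormula.Realize Language.graph _ (frameStructure (Frel m')) _ _ φ v' ys) := by
  induction φ with
  | falsum => exact ⟨1, le_rfl, fun _ _ _ _ _ _ _ _ _ _ _ => Iff.rfl⟩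
  | equal t₁ t₂ =>
    refine ⟨1, le_rfl, fun m m' v v' xs ys S h0 hm hS hI => ?_⟩
    obtain ⟨i, rfl⟩ := term_eq t₁
    obtain ⟨j, rfl⟩ := term_eq t₂
    change xs i = xs j ↔ ys i = ys j
    rw [pos_inj, pos_inj]
    have := hI _ (hS i) _ (hS j)
    simp only [Agree] at this
    omega
  | rel R ts =>
    refine ⟨1, le_rfl, fun m m' v v' xs ys S h0 hm hS hI => ?_⟩
    cases R
    obtain ⟨i, hi⟩ := term_eq (ts 0)
    obtain ⟨j, hj⟩ := term_eq (ts 1)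
    simp only [Language.BoundedFormula.Realize]
    change Frel m _ _ ↔ Frel m' _ _
    beta_reduce
    rw [hi, hj]
    change Frel m (xs i) (xs j) ↔ Frel m' (ys i) (ys j)
    rw [Frel_iff, Frel_iff]
    have h1 := hI _ (hS i) _ (hS j)
    have h2 := hI _ (hS i) _ h0
    have h3 := hI _ (hS j) _ h0
    simp only [Agree] at h1 h2 h3
    omega
  | imp f g ihf ihg =>
    obtain ⟨T₁, h₁, ihf⟩ := ihf
    obtain ⟨T₂, h₂, ihg⟩ := ihg
    refine ⟨max T₁ T₂, le_max_of_le_left h₁, fun m m' v v' xs ys S h0 hm hS hI => ?_⟩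
    exact imp_congr (ihf m m' v v' xs ys S h0 hm hS (hI.mono (le_max_left _ _)))
      (ihg m m' v v' xs ys S h0 hm hS (hI.mono (le_max_right _ _)))
  | all f ih =>
    obtain ⟨T, hT, ih⟩ := ih
    refine ⟨2 * T + 1, by omega, fun m m' v v' xs ys S h0 hm hS hI => ?_⟩
    have step : ∀ (x : Fin m ⊕ Unit) (y : Fin m' ⊕ Unit), Inv T (insert (pos x, pos y) S) →
        (@Language.BoundedFormula.Realize Language.graph _ (frameStructure (Frel m)) _ _ f v
            (Fin.snoc xs x) ↔
          @Language.BoundedFormula.Realize Language.graph _ (frameStructure (Frel m')) _ _ f v'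
            (Fin.snoc ys y)) := by
      intro x y h
      refine ih m m' v v' _ _ _ (Finset.mem_insert_of_mem h0) (Finset.mem_insert_of_mem hm) ?_ h
      intro i
      refine Fin.lastCases ?_ (fun i => ?_) i
      · simp
      · simp only [Fin.snoc_castSucc]
        exact Finset.mem_insert_of_mem (hS i)
    constructor
    · intro H y
      obtain ⟨z, hz0, hzm, hz⟩ := back hT h0 hm hI (pos y) (pos_nonneg y) (pos_le y)
      obtain ⟨x, rfl⟩ := pos_surj z hz0 hzm
      exact (step x y hz).1 (H x)
    · intro H x
      obtain ⟨z, hz0, hzm, hz⟩ := forth hT h0 hm hI (pos x) (pos_nonneg x) (pos_le x)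
      obtain ⟨y, rfl⟩ := pos_surj z hz0 hzm
      exact (step x y hz).2 (H y)

end EFGame

theorem stmt2 (Φ : Language.graph.Sentence) :
    ∃ N : ℕ, 1 ≤ N ∧ ∀ m m' : ℕ, N ≤ m → N ≤ m' →
      (@FirstOrder.Language.Sentence.Realize Language.graph (Fin m ⊕ Unit) (frameStructure (Frel m)) Φ ↔
       @FirstOrder.Language.Sentence.Realize Language.graph (Fin m' ⊕ Unit) (frameStructure (Frel m')) Φ) := by
  obtain ⟨T, hT, h⟩ := EFGame.main Φ
  refine ⟨T.toNat + 1, by omega, fun m m' hm hm' => ?_⟩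
  refine h m m' _ _ _ _ {(0, 0), ((m : ℤ), (m' : ℤ))} (by simp) (by simp) (fun i => i.elim0) ?_
  have e1 : T < m := by have := Int.self_le_toNat T; omega
  have e2 : T < m' := by have := Int.self_le_toNat T; omega
  intro s hs t ht
  simp only [Finset.mem_insert, Finset.mem_singleton] at hs ht
  rcases hs with rfl | rfl <;> rcases ht with rfl | rfl <;> simp [EFGame.Agree] <;> omega
end

section
/- For every L-sentence Φ there exists an integer N ≥ 2 such that for all integers m, m' ≥ N, Φ is true in the structure G_m if and only if Φ is true in the structure G_{m'}. -/
open FirstOrder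

/-- The accessibility relation of the frame `G_m`:
worlds are `w_1, …, w_m` (encoded as `Sum.inl i` for `i : Fin m`, `w_{i+1} = Sum.inl i`)
together with `w*` (encoded as `Sum.inr ()`); `w_i R w_{i+1}` for `1 ≤ i < m`,
`w_m R w_1`, and `w_1 R w*`. -/
def Grel (m : ℕ) : (Fin m ⊕ Unit) → (Fin m ⊕ Unit) → Prop
  | Sum.inl i, Sum.inl j => (j : ℕ) = (i : ℕ) + 1 ∨ ((i : ℕ) = m - 1 ∧ (j : ℕ) = 0)
  | Sum.inl i, Sum.inr _ => (i : ℕ) = 0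
  | Sum.inr _, _ => False

/-- `d` and `d'` agree up to threshold `T`. -/
def Close (T d d' : ℤ) : Prop := d = d' ∨ (T ≤ d ∧ T ≤ d') ∨ (d ≤ -T ∧ d' ≤ -T)

def CloseSet (T : ℤ) (S : Finset (ℤ × ℤ)) : Prop :=
  ∀ p ∈ S, ∀ q ∈ S, Close T (p.1 - q.1) (p.2 - q.2)

theorem CloseSet.mono {T T' : ℤ} {S : Finset (ℤ × ℤ)} (h : T ≤ T') (hS : CloseSet T' S) :
    CloseSet T S := by
  intro p hp q hq
  have := hS p hp q hq
  unfold Close at *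
  omega

theorem CloseSet.symm {T : ℤ} {S : Finset (ℤ × ℤ)} (hS : CloseSet T S) :
    CloseSet T (S.image Prod.swap) := by
  intro p hp q hq
  simp only [Finset.mem_image] at hp hq
  obtain ⟨p, hp, rfl⟩ := hp
  obtain ⟨q, hq, rfl⟩ := hq
  have := hS p hp q hq
  simp only [Close, Prod.fst_swap, Prod.snd_swap] at *
  omega

/-- The extension step. -/
theorem CloseSet.extend {T : ℤ} {S : Finset (ℤ × ℤ)} (hT : 2 ≤ T) (hS : CloseSet (2 * T) S)
    (x : ℤ) (h0 : ∃ p ∈ S, p.1 < x + T) : ∃ y, CloseSet T (insert (x, y) S) := by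
  suffices h : ∃ y, ∀ p ∈ S, Close T (x - p.1) (y - p.2) by
    obtain ⟨y, hy⟩ := h
    refine ⟨y, ?_⟩
    have hS' := hS.mono (show T ≤ 2 * T by omega)
    intro p hp q hq
    rw [Finset.mem_insert] at hp hq
    rcases hp with rfl | hp <;> rcases hq with rfl | hq
    · left; simp
    · exact hy q hq
    · have := hy p hp
      simp only [Close] at *
      omega
    · exact hS' p hp q hq
  by_cases hc : ∃ p ∈ S, -T < x - p.1 ∧ x - p.1 < T
  · obtain ⟨p, hp, h1, h2⟩ := hc
    refine ⟨p.2 + (x - p.1), fun q hq => ?_⟩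
    have := hS p hp q hq
    simp only [Close] at *
    omega
  · push Not at hc
    obtain ⟨p0, hp0, hlt⟩ := h0
    have hne : (S.filter (fun p => p.1 ≤ x)).Nonempty := by
      refine ⟨p0, ?_⟩
      rw [Finset.mem_filter]
      refine ⟨hp0, ?_⟩
      have := hc p0 hp0
      omega
    obtain ⟨p, hp, hmax⟩ := Finset.exists_max_image _ (fun p : ℤ × ℤ => p.1) hne
    rw [Finset.mem_filter] at hp
    refine ⟨p.2 + T, fun q hq => ?_⟩
    have h1 := hS p hp.1 q hq
    have h2 := hc p hp.1
    have h3 := hc q hq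
    have h4 : q.1 ≤ x → q.1 ≤ p.1 := fun h => hmax q (Finset.mem_filter.2 ⟨hq, h⟩)
    have h5 := hp.2
    simp only [Close] at *
    omega

/-- Position of a world: `w_{i+1}` sits at `i`, and `w*` sits at `-1`. -/
def pos (m : ℕ) : Fin m ⊕ Unit → ℤ
  | Sum.inl i => (i : ℕ)
  | Sum.inr _ => -1

theorem pos_bounds (m : ℕ) (a : Fin m ⊕ Unit) : -1 ≤ pos m a ∧ (pos m a < m) := by
  rcases a with i | u
  · have := i.2
    simp only [pos]; omega
  · simp only [pos]; omega

theorem pos_inj (m : ℕ) (a b : Fin m ⊕ Unit) : a = b ↔ pos m a = pos m b := by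
  rcases a with i | u <;> rcases b with j | v <;> simp [pos, Fin.ext_iff]

theorem pos_surj (m : ℕ) (y : ℤ) (h : -1 ≤ y) (h' : y < m) : ∃ a, pos m a = y := by
  by_cases hy : y = -1
  · exact ⟨Sum.inr (), by simp [pos, hy]⟩
  · refine ⟨Sum.inl ⟨y.toNat, by omega⟩, ?_⟩
    simp only [pos]; omega

theorem Grel_pos (m : ℕ) (a b : Fin m ⊕ Unit) : Grel m a b ↔
    (0 ≤ pos m a ∧ pos m b = pos m a + 1) ∨ (0 ≤ pos m a ∧ pos m a = m - 1 ∧ pos m b = 0) ∨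
      (pos m a = 0 ∧ pos m b = -1) := by
  rcases a with i | u <;> rcases b with j | v
  · have := i.2
    simp only [pos, Grel]; omega
  · simp [pos, Grel]
    omega
  · simp [pos, Grel]
  · simp [pos, Grel]

/-- The structure `G_m`. -/
instance gInst (m : ℕ) : Language.graph.Structure (Fin m ⊕ Unit) := frameStructure (Grel m)

structure GInv (T : ℤ) (m m' k : ℕ) (S : Finset (ℤ × ℤ)) (xs : Fin k → Fin m ⊕ Unit)
    (ys : Fin k → Fin m' ⊕ Unit) : Prop where
  close : CloseSet T S
  zero : (0, 0) ∈ S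
  top : ((m : ℤ), (m' : ℤ)) ∈ S
  mem : ∀ i, (pos m (xs i), pos m' (ys i)) ∈ S

theorem GInv.mono {T T' : ℤ} {m m' k S xs ys} (h : T ≤ T') (hI : GInv T' m m' k S xs ys) :
    GInv T m m' k S xs ys := ⟨hI.close.mono h, hI.zero, hI.top, hI.mem⟩

theorem GInv.symm {T : ℤ} {m m' k S xs ys} (hI : GInv T m m' k S xs ys) :
    GInv T m' m k (S.image Prod.swap) ys xs :=
  ⟨hI.close.symm, Finset.mem_image.2 ⟨_, hI.zero, rfl⟩, Finset.mem_image.2 ⟨_, hI.top, rfl⟩,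
    fun i => Finset.mem_image.2 ⟨_, hI.mem i, rfl⟩⟩

theorem GInv.extend {T : ℤ} {m m' k S xs ys} (hT : 2 ≤ T) (hI : GInv (2 * T) m m' k S xs ys)
    (a : Fin m ⊕ Unit) :
    ∃ b S', GInv T m m' (k + 1) S' (Fin.snoc xs a) (Fin.snoc ys b) := by
  have hb := pos_bounds m a
  obtain ⟨y, hy⟩ := hI.close.extend hT (pos m a) ⟨_, hI.zero, by simp only; omega⟩
  have h1 := hy _ (Finset.mem_insert_self _ _) _ (Finset.mem_insert_of_mem hI.zero)
  have h2 := hy _ (Finset.mem_insert_self _ _) _ (Finset.mem_insert_of_mem hI.top)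
  simp only [Close] at h1 h2
  obtain ⟨b, rfl⟩ := pos_surj m' y (by omega) (by omega)
  refine ⟨b, _, hy, Finset.mem_insert_of_mem hI.zero, Finset.mem_insert_of_mem hI.top, ?_⟩
  intro i
  refine Fin.lastCases ?_ (fun j => ?_) i
  · simp
  · simpa using Or.inr (hI.mem j)

theorem term_var {k : ℕ} (t : Language.graph.Term (Empty ⊕ Fin k)) :
    ∃ i : Fin k, t = Language.Term.var (Sum.inr i) := by
  cases t with
  | var v => rcases v with e | i
             · exact e.elim
             · exact ⟨i, rfl⟩
  | func f _ => exact isEmptyElim f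

theorem main_aux {k : ℕ} (φ : Language.graph.BoundedFormula Empty k) :
    ∃ T : ℤ, 2 ≤ T ∧ ∀ m m' S (xs : Fin k → Fin m ⊕ Unit) (ys : Fin k → Fin m' ⊕ Unit),
      GInv T m m' k S xs ys → 
        ∀ v v', (φ.Realize v xs ↔ φ.Realize v' ys) := by
  induction φ with
  | falsum => exact ⟨2, le_rfl, fun _ _ _ _ _ _ _ _ => Iff.rfl⟩
  | equal t₁ t₂ =>
    refine ⟨2, le_rfl, fun m m' S xs ys hI v v' => ?_⟩
    obtain ⟨i, rfl⟩ := term_var t₁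
    obtain ⟨j, rfl⟩ := term_var t₂
    have h := hI.close _ (hI.mem i) _ (hI.mem j)
    simp only [Close] at h
    simp only [Language.BoundedFormula.Realize, Language.Term.realize_var, Sum.elim_inr, pos_inj]
    omega
  | @rel k l R ts =>
    refine ⟨2, le_rfl, fun m m' S xs ys hI v v' => ?_⟩
    cases R with
    | adj =>
      obtain ⟨i, hi⟩ := term_var (ts 0)
      obtain ⟨j, hj⟩ := term_var (ts 1)
      have h := hI.close _ (hI.mem i) _ (hI.mem j)
      have h0 := hI.close _ (hI.mem i) _ hI.zero
      have h0' := hI.close _ (hI.mem j) _ hI.zero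
      have ht := hI.close _ (hI.mem i) _ hI.top
      simp only [Close] at h h0 h0' ht
      have key : ∀ n (zs : Fin k → Fin n ⊕ Unit) (v : Empty → Fin n ⊕ Unit),
          (Language.BoundedFormula.rel Language.graphRel.adj ts).Realize v zs ↔
            Grel n (zs i) (zs j) := by
        intro n zs v
        change Grel n ((ts 0).realize _) ((ts 1).realize _) ↔ _
        rw [hi, hj]
        rfl
      refine (key m xs v).trans (Iff.trans ?_ (key m' ys v').symm)
      rw [Grel_pos, Grel_pos]
      omega
  | imp φ ψ ih₁ ih₂ =>
    obtain ⟨T₁, h₁, H₁⟩ := ih₁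
    obtain ⟨T₂, h₂, H₂⟩ := ih₂
    refine ⟨max T₁ T₂, le_max_of_le_left h₁, fun m m' S xs ys hI v v' => ?_⟩
    simp only [Language.BoundedFormula.realize_imp]
    rw [H₁ m m' S xs ys (hI.mono (le_max_left _ _)) v v', H₂ m m' S xs ys (hI.mono (le_max_right _ _)) v v']
  | all φ ih =>
    obtain ⟨T, h, H⟩ := ih
    refine ⟨2 * T, by omega, fun m m' S xs ys hI v v' => ?_⟩
    simp only [Language.BoundedFormula.realize_all]
    constructor
    · intro hx b
      obtain ⟨a, S', hI'⟩ := hI.symm.extend h b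
      exact (H _ _ _ _ _ hI' _ _).2 (hx a)
    · intro hy a
      obtain ⟨b, S', hI'⟩ := hI.extend h a
      exact (H _ _ _ _ _ hI' _ _).2 (hy b)

theorem stmt4 (Φ : Language.graph.Sentence) :
    ∃ N : ℕ, 2 ≤ N ∧ ∀ m m' : ℕ, N ≤ m → N ≤ m' →
      (@FirstOrder.Language.Sentence.Realize Language.graph (Fin m ⊕ Unit)
        (frameStructure (Grel m)) Φ ↔
       @FirstOrder.Language.Sentence.Realize Language.graph (Fin m' ⊕ Unit)
        (frameStructure (Grel m')) Φ) := by
  obtain ⟨T, hT, H⟩ := main_aux Φ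
  refine ⟨T.toNat, by omega, fun m m' hm hm' => ?_⟩
  unfold Language.Sentence.Realize Language.Formula.Realize
  refine H m m' {(0, 0), ((m : ℤ), (m' : ℤ))} _ _ ⟨?_, by simp, by simp, fun i => i.elim0⟩ _ _
  intro p hp q hq
  simp only [Finset.mem_insert, Finset.mem_singleton] at hp hq
  have h1 : T ≤ m := by omega
  have h2 : T ≤ m' := by omega
  rcases hp with rfl | rfl <;> rcases hq with rfl | rfl
  · left; simp
  · right; right; constructor <;> simp <;> omega
  · right; left; constructor <;> simp <;> omega
  · left; simp
end

section
/- For every integer n ≥ 1: n is even if and only if for every even integer m ≥ 2 and every world w of the frame F_m, it is not the case that w has a dead-end R-successor and there exists a dead end v with w R^n v. -/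
theorem pathRel_inl_aux (m k : ℕ) : ∀ (i : Fin m) (v : Fin m ⊕ Unit), 1 ≤ (i : ℕ) →
    pathRel (Frel m) k (Sum.inl i) v → ∃ j : Fin m, v = Sum.inl j ∧ (j : ℕ) = i + k := by
  induction k with
  | zero => intro i v _ h; exact ⟨i, h.symm, rfl⟩
  | succ k ih =>
    rintro i v hi ⟨u, hu, h⟩
    rcases u with j | u
    · have hj : (j : ℕ) = i + 1 := hu
      obtain ⟨l, hl, e⟩ := ih j v (by omega) h
      exact ⟨l, hl, by omega⟩
    · have h0 : (i : ℕ) = 0 := hu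
      omega

theorem deadEnd_inl_aux (m : ℕ) (j : Fin m) (h : DeadEnd (Frel m) (Sum.inl j)) :
    (j : ℕ) + 1 = m := by
  by_contra hne
  have hj := j.2
  exact h (Sum.inl ⟨j + 1, by omega⟩) rfl

theorem pathRel_exists_aux (m k : ℕ) : ∀ (i : ℕ) (h : i + k < m),
    pathRel (Frel m) k (Sum.inl ⟨i, by omega⟩) (Sum.inl ⟨i + k, h⟩) := by
  induction k with
  | zero => intro i h; rfl
  | succ k ih =>
    intro i h
    refine ⟨Sum.inl ⟨i + 1, by omega⟩, rfl, ?_⟩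
    have := ih (i + 1) (by omega)
    convert this using 3
    omega

theorem stmt5 (n : ℕ) (hn : 1 ≤ n) :
    Even n ↔
      ∀ m : ℕ, 2 ≤ m → Even m → ∀ w : Fin m ⊕ Unit,
        ¬ ((∃ v, Frel m w v ∧ DeadEnd (Frel m) v) ∧
           (∃ v, pathRel (Frel m) n w v ∧ DeadEnd (Frel m) v)) := by
  constructor
  · rintro he m hm hme w ⟨⟨v, hwv, hv⟩, x, hx, hxd⟩
    obtain ⟨k, rfl⟩ : ∃ k, n = k + 1 := ⟨n - 1, by omega⟩
    obtain ⟨a, ha⟩ := he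
    obtain ⟨b, hb⟩ := hme
    obtain ⟨u, hu, hp⟩ := hx
    rcases w with i | w
    · rcases u with j | u
      · have hj : (j : ℕ) = i + 1 := hu
        obtain ⟨l, rfl, e⟩ := pathRel_inl_aux m k j x (by omega) hp
        have hl := deadEnd_inl_aux m l hxd
        rcases v with j' | v
        · have hj' : (j' : ℕ) = i + 1 := hwv
          have := deadEnd_inl_aux m j' hv
          omega
        · have h0 : (i : ℕ) = 0 := hwv
          omega
      · cases k with
        | zero => omega
        | succ k =>
          obtain ⟨y, hy, _⟩ := hp
          exact hy
    · exact hu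
  · intro h
    by_contra hne
    refine h (n + 1) (by omega) (by rw [Nat.even_add_one]; exact hne) (Sum.inl ⟨0, by omega⟩)
      ⟨⟨Sum.inr (), rfl, fun u hu => hu⟩, _, pathRel_exists_aux (n + 1) n 0 (by omega), ?_⟩
    rintro (j | u) hu
    · have hj : (j : ℕ) = 0 + n + 1 := hu
      have := j.2
      omega
    · have h0 : 0 + n = 0 := hu
      omega
end

section
/- For every integer n ≥ 1: n is odd if and only if for every even integer m ≥ 2, no world of the frame G_m satisfies condition B_n. -/
theorem pathRel_inr_inl (m k : ℕ) (j : Fin m) :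
    ¬ pathRel (Grel m) k (Sum.inr ()) (Sum.inl j) := by
  cases k with
  | zero => simp [pathRel]
  | succ k => rintro ⟨u, hu, -⟩; exact hu

theorem pathRel_inl_iff (m : ℕ) (hm : 2 ≤ m) (k : ℕ) :
    ∀ i j : Fin m, pathRel (Grel m) k (Sum.inl i) (Sum.inl j) ↔
      (j : ℕ) = ((i : ℕ) + k) % m := by
  induction k with
  | zero =>
    intro i j
    have hi := Nat.mod_eq_of_lt i.isLt
    simp only [pathRel, Sum.inl.injEq, Nat.add_zero, hi, Fin.ext_iff]
    exact eq_comm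
  | succ k ih =>
    intro i j
    constructor
    · rintro ⟨u, hu, hp⟩
      rcases u with u | u
      · rw [ih] at hp
        rcases hu with h | ⟨h1, h2⟩
        · rw [hp, h]; congr 1; omega
        · rw [hp, h2]
          have : (i : ℕ) + (k + 1) = (0 + k) + m := by omega
          rw [this, Nat.add_mod_right]
      · exact absurd hp (pathRel_inr_inl m k j)
    · intro h
      have hi := i.isLt
      by_cases hc : (i : ℕ) + 1 < m
      · refine ⟨Sum.inl ⟨i + 1, hc⟩, Or.inl rfl, ?_⟩
        rw [ih, h]; congr 1; simp only []; omega
      · refine ⟨Sum.inl ⟨0, by omega⟩, Or.inr ⟨by omega, rfl⟩, ?_⟩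
        rw [ih, h]
        have : (i : ℕ) + (k + 1) = (0 + k) + m := by omega
        rw [this, Nat.add_mod_right]

theorem deadSucc_iff (m : ℕ) (hm : 2 ≤ m) (w : Fin m ⊕ Unit) :
    (∃ v, Grel m w v ∧ DeadEnd (Grel m) v) ↔ w = Sum.inl ⟨0, by omega⟩ := by
  constructor
  · rintro ⟨v, hv, hd⟩
    rcases v with v | v
    · exfalso
      by_cases hc : (v : ℕ) + 1 < m
      · exact hd (Sum.inl ⟨v + 1, hc⟩) (Or.inl rfl)
      · have := v.isLt
        exact hd (Sum.inl ⟨0, by omega⟩) (Or.inr ⟨by omega, rfl⟩)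
    · rcases w with w | w
      · have h0 : (w : ℕ) = 0 := hv
        congr 1
        exact Fin.ext h0
      · exact hv.elim
  · rintro rfl
    exact ⟨Sum.inr (), rfl, fun u hu => hu⟩

theorem stmt6 (n : ℕ) (hn : 1 ≤ n) :
    Odd n ↔
      ∀ m : ℕ, 2 ≤ m → Even m → ∀ w : Fin m ⊕ Unit, ¬ CondB (Grel m) n w := by
  constructor
  · rintro hodd m hm hme w ⟨h1, ⟨v, hp, hv⟩, -⟩
    rw [deadSucc_iff m hm] at h1 hv
    subst h1 hv
    rw [pathRel_inl_iff m hm] at hp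
    simp only [Nat.zero_add] at hp
    have hd : m ∣ n := Nat.dvd_of_mod_eq_zero hp.symm
    exact (Nat.not_even_iff_odd.mpr hodd) (hme.trans_dvd hd)
  · intro h
    by_contra hne
    have he : Even n := Nat.not_odd_iff_even.mp hne
    have h2 : 2 ≤ n := by obtain ⟨r, hr⟩ := he; omega
    refine h n h2 he (Sum.inl ⟨0, by omega⟩) ⟨(deadSucc_iff n h2 _).mpr rfl,
      ⟨_, ?_, (deadSucc_iff n h2 _).mpr rfl⟩, ?_⟩
    · rw [pathRel_inl_iff n h2]; simp
    · rintro k hk1 hk2 ⟨v, hp, hv⟩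
      rw [deadSucc_iff n h2] at hv
      subst hv
      rw [pathRel_inl_iff n h2] at hp
      simp only [Nat.zero_add] at hp
      rw [Nat.mod_eq_of_lt (by omega)] at hp
      omega
end

section
/- For every even integer m ≥ 2, the frame G_m has the following properties: (a) every world has at most two R-successors; (b) every world having two distinct R-successors has a dead-end R-successor; (c) for all integers n ≥ 1 and k ≥ 1 and all worlds v, w of G_m, if v R^k w and w satisfies condition B_n, then v R^n v; (d) for every integer n ≥ 1, every world w of G_m satisfying condition B_n, and every world v with w R^n v, one has v = w. -/
theorem grel_inl {m : ℕ} (hm : 2 ≤ m) (i j : Fin m) :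
    Grel m (Sum.inl i) (Sum.inl j) ↔ (j : ℕ) = ((i : ℕ) + 1) % m := by
  have hi := i.2
  have hj := j.2
  simp only [Grel]
  by_cases h : (i : ℕ) + 1 = m
  · rw [h, Nat.mod_self]; omega
  · rw [Nat.mod_eq_of_lt (by omega)]; omega

theorem path_inl {m : ℕ} (hm : 2 ≤ m) (k : ℕ) : ∀ (i j : Fin m),
    pathRel (Grel m) k (Sum.inl i) (Sum.inl j) ↔ (j : ℕ) = ((i : ℕ) + k) % m := by
  induction k with
  | zero =>
    intro i j
    simp only [pathRel, Sum.inl.injEq, Fin.ext_iff, Nat.add_zero, Nat.mod_eq_of_lt i.2]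
    exact eq_comm
  | succ k ih =>
    intro i j
    simp only [pathRel]
    constructor
    · rintro ⟨u | u, h1, h2⟩
      · rw [grel_inl hm] at h1
        rw [ih, h1, Nat.mod_add_mod] at h2
        rw [h2]; congr 1; omega
      · cases k with
        | zero => simp [pathRel] at h2
        | succ k => obtain ⟨_, h, _⟩ := h2; exact h.elim
    · intro h
      refine ⟨Sum.inl ⟨((i : ℕ) + 1) % m, Nat.mod_lt _ (by omega)⟩, ?_, ?_⟩
      · rw [grel_inl hm]
      · rw [ih, h]; simp only [Nat.mod_add_mod]; congr 1; omega

theorem path_inr {m : ℕ} (hm : 2 ≤ m) (k : ℕ) (x : Unit) : ∀ (i : Fin m),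
    pathRel (Grel m) (k + 1) (Sum.inl i) (Sum.inr x) → ((i : ℕ) + k) % m = 0 := by
  induction k with
  | zero =>
    rintro i ⟨u, h1, h2⟩
    simp only [pathRel] at h2
    subst h2
    have h0 : (i : ℕ) = 0 := h1
    simp [h0]
  | succ k ih =>
    rintro i ⟨u | u, h1, h2⟩
    · rw [grel_inl hm] at h1
      have := ih u h2
      rw [h1, Nat.mod_add_mod] at this
      rw [← this]; congr 1; omega
    · obtain ⟨_, h, _⟩ := h2; exact h.elim

theorem dead_succ {m : ℕ} (hm : 2 ≤ m) (w : Fin m ⊕ Unit) :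
    (∃ v, Grel m w v ∧ DeadEnd (Grel m) v) ↔ w = Sum.inl ⟨0, by omega⟩ := by
  constructor
  · rintro ⟨v | v, h1, h2⟩
    · exact (h2 (Sum.inl ⟨((v : ℕ) + 1) % m, Nat.mod_lt _ (by omega)⟩)
        ((grel_inl hm _ _).2 rfl)).elim
    · cases w with
      | inl i => congr 1; exact Fin.ext h1
      | inr x => exact h1.elim
  · rintro rfl
    exact ⟨Sum.inr (), rfl, fun u h => h⟩

theorem condB_eq {m : ℕ} (hm : 2 ≤ m) (n : ℕ) (hn : 1 ≤ n) (w : Fin m ⊕ Unit)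
    (h : CondB (Grel m) n w) : w = Sum.inl ⟨0, by omega⟩ ∧ n = m := by
  obtain ⟨h1, ⟨v, h2, h3⟩, h4⟩ := h
  rw [dead_succ hm] at h1 h3
  subst h1 h3
  refine ⟨rfl, ?_⟩
  rw [path_inl hm] at h2
  simp only [Nat.zero_add] at h2
  have hd : m ∣ n := Nat.dvd_of_mod_eq_zero h2.symm
  have hle := Nat.le_of_dvd (by omega) hd
  by_contra hne
  refine h4 m hm (by omega) ⟨Sum.inl ⟨0, by omega⟩, ?_, (dead_succ hm _).2 rfl⟩
  rw [path_inl hm]; simp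

theorem stmt8 (m : ℕ) (hm : 2 ≤ m) (hmeven : Even m) :
    -- (a) every world has at most two `R`-successors
    (∀ w v₁ v₂ v₃ : Fin m ⊕ Unit, Grel m w v₁ → Grel m w v₂ → Grel m w v₃ →
      v₁ = v₂ ∨ v₁ = v₃ ∨ v₂ = v₃) ∧
    -- (b) every world having two distinct `R`-successors has a dead-end `R`-successor
    (∀ w v₁ v₂ : Fin m ⊕ Unit, Grel m w v₁ → Grel m w v₂ → v₁ ≠ v₂ →
      ∃ v, Grel m w v ∧ DeadEnd (Grel m) v) ∧
    -- (c) for all `n ≥ 1`, `k ≥ 1`: if `v R^k w` and `w` satisfies `B_n`, then `v R^n v`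
    (∀ n k : ℕ, 1 ≤ n → 1 ≤ k → ∀ v w : Fin m ⊕ Unit,
      pathRel (Grel m) k v w → CondB (Grel m) n w → pathRel (Grel m) n v v) ∧
    -- (d) for all `n ≥ 1`: if `w` satisfies `B_n` and `w R^n v`, then `v = w`
    (∀ n : ℕ, 1 ≤ n → ∀ w : Fin m ⊕ Unit, CondB (Grel m) n w →
      ∀ v : Fin m ⊕ Unit, pathRel (Grel m) n w v → v = w) := by
  refine ⟨?_, ?_, ?_, ?_⟩
  · rintro (i | x) (a | a) (b | b) (c | c) h1 h2 h3
    all_goals first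
      | exact h1.elim
      | exact Or.inl rfl
      | exact Or.inr (Or.inl rfl)
      | exact Or.inr (Or.inr rfl)
      | skip
    all_goals simp only [grel_inl hm] at h1 h2 h3
    all_goals simp only [Sum.inl.injEq, Fin.ext_iff, reduceCtorEq, or_false, false_or, true_or, or_true]
    all_goals omega
  · rintro (i | x) (a | a) (b | b) h1 h2 h3
    all_goals first
      | exact h1.elim
      | skip
    · rw [grel_inl hm] at h1 h2
      exact (h3 (congrArg Sum.inl (Fin.ext (h1.trans h2.symm)))).elim
    · exact ⟨_, h2, fun u h => h⟩
    · exact ⟨_, h1, fun u h => h⟩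
    · exact ⟨_, h1, fun u h => h⟩
  · intro n k hn hk v w hp hB
    obtain ⟨rfl, rfl⟩ := condB_eq hm n hn w hB
    cases v with
    | inl i => rw [path_inl hm]; simp [Nat.mod_eq_of_lt i.2]
    | inr x =>
      obtain ⟨k, rfl⟩ : ∃ k', k = k' + 1 := ⟨k - 1, by omega⟩
      obtain ⟨_, h, _⟩ := hp
      exact h.elim
  · intro n hn w hB v hp
    obtain ⟨rfl, rfl⟩ := condB_eq hm n hn w hB
    cases v with
    | inl j =>
      rw [path_inl hm] at hp
      congr 1
      apply Fin.ext
      simpa using hp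
    | inr x =>
      have key : ∀ k, n = k + 1 → False := by
        intro k hk
        have hp' : pathRel (Grel n) (k + 1) (Sum.inl ⟨0, by omega⟩) (Sum.inr x) := by
          rw [← hk]; exact hp
        have := path_inr hm k x _ hp'
        simp only [Nat.zero_add] at this
        rw [Nat.mod_eq_of_lt (by omega)] at this
        omega
      exact (key (n - 1) (by omega)).elim
end

section
/- For every frame (W,R), the following are equivalent: (1) for every predicate P : W → Prop and every world w ∈ W, either w has a dead-end R-successor, or (if some R-successor of w satisfies P, then every R-successor of w satisfies P); (2) every world of W having two distinct R-successors has a dead-end R-successor. -/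
theorem stmt9 {W : Type*} [Nonempty W] (R : W → W → Prop) :
    -- (1) validity of `γ = ◇□⊥ ∨ (◇p → □p)` on the frame `(W, R)`
    (∀ P : W → Prop, ∀ w : W,
        (∃ v, R w v ∧ DeadEnd R v) ∨ ((∃ v, R w v ∧ P v) → ∀ v, R w v → P v)) ↔
    -- (2) every world having two distinct successors has a dead-end successor
    (∀ w v₁ v₂ : W, R w v₁ → R w v₂ → v₁ ≠ v₂ → ∃ v, R w v ∧ DeadEnd R v) := by
  constructor
  · intro h w v₁ v₂ h₁ h₂ hne
    rcases h (fun v => v = v₁) w with hd | hp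
    · exact hd
    · exact absurd (hp ⟨v₁, h₁, rfl⟩ v₂ h₂).symm hne
  · intro h P w
    by_cases hd : ∃ v, R w v ∧ DeadEnd R v
    · exact Or.inl hd
    · refine Or.inr ?_
      rintro ⟨v₁, h₁, hP⟩ v h₂
      by_cases e : v₁ = v
      · exact e ▸ hP
      · exact absurd (h w v₁ v h₁ h₂ e) hd
end

section
/- Let (W,R) be a frame with a distinguished world w₁ satisfying conditions (Φ1)–(Φ4), with witnesses w*, w₂, w₂* as in (Φ2). If u_1, …, u_k (k ≥ 2) are worlds of W such that u_1 = w₁, u_2 = w₂, u_i R u_{i+1} for all 1 ≤ i < k, and u_k has no R-successor, then k is even. -/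
/-- Condition (Φ1): `R` is irreflexive and there are no `x, y, z` with
`x R y`, `y R z` and `x R z`. -/
def Phi1 {W : Type*} (R : W → W → Prop) : Prop :=
  (∀ x, ¬ R x x) ∧ (∀ x y z, R x y → R y z → ¬ R x z)

/-- The body of condition (Φ2) at the distinguished world `w₁`,
with explicit witnesses `ws = w*`, `w₂`, `w₂s = w₂*`. -/
def Phi2With {W : Type*} (R : W → W → Prop) (w₁ ws w₂ w₂s : W) : Prop :=
  (∀ x, R w₁ x ↔ (x = ws ∨ x = w₂)) ∧ ws ≠ w₂ ∧
  R w₂s w₂ ∧ (¬ ∃ x, R x w₁) ∧ (¬ ∃ x, R x w₂s) ∧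
  (∀ x, R x ws → x = w₁) ∧ (¬ ∃ x, R ws x) ∧ w₁ ≠ w₂s

/-- Condition (Φ3) at the distinguished world `w₁`: every world other than `w₁` has at most
one `R`-successor, and no world has three pairwise distinct `R`-predecessors. -/
def Phi3 {W : Type*} (R : W → W → Prop) (w₁ : W) : Prop :=
  (∀ x, x ≠ w₁ → ∀ y z, R x y → R x z → y = z) ∧
  (∀ w, ¬ ∃ x y z, x ≠ y ∧ y ≠ z ∧ x ≠ z ∧ R x w ∧ R y w ∧ R z w)

/-- Condition (Φ4). -/
def Phi4 {W : Type*} (R : W → W → Prop) : Prop :=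
  ∀ w, (∃ y z, y ≠ z ∧ R y w ∧ R z w) →
    ((¬ ∃ x, R w x) ∨
      ∃ x y z, R w y ∧ R y x ∧ R z x ∧ y ≠ z ∧ x ≠ w ∧
        (∀ u, R u y → u = w) ∧ ¬ ∃ u, R u z)

theorem stmt13 {W : Type*} [Nonempty W] (R : W → W → Prop)
    (w₁ ws w₂ w₂s : W)
    (h1 : Phi1 R) (h2 : Phi2With R w₁ ws w₂ w₂s) (h3 : Phi3 R w₁) (h4 : Phi4 R)
    (k : ℕ) (hk : 2 ≤ k) (u : ℕ → W)
    (hu0 : u 0 = w₁) (hu1 : u 1 = w₂)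
    (hchain : ∀ i, i + 1 < k → R (u i) (u (i + 1)))
    (hlast : ¬ ∃ v, R (u (k - 1)) v) :
    Even k := by
  obtain ⟨hs1, hne, hw2, hnp1, -, -, -, hw12⟩ := h2
  have hnw : ∀ i, i + 1 < k → u (i + 1) ≠ w₁ := fun i hi h =>
    hnp1 ⟨u i, h ▸ hchain i hi⟩
  have step : ∀ i, i + 2 < k → (∃ y z, y ≠ z ∧ R y (u (i + 1)) ∧ R z (u (i + 1))) →
      ∃ x z, R (u (i + 2)) x ∧ R z x ∧ u (i + 2) ≠ z := by
    intro i hi hp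
    rcases h4 _ hp with hd | ⟨x, y, z, hwy, hyx, hzx, hyz, -, -, -⟩
    · exact absurd ⟨_, hchain (i + 1) hi⟩ hd
    · have e : y = u (i + 2) :=
        h3.1 _ (hnw i (by omega)) _ _ hwy (hchain (i + 1) hi)
      subst e
      exact ⟨x, z, hyx, hzx, hyz⟩
  have key : ∀ j, 2 * j + 1 < k →
      ∃ y z, y ≠ z ∧ R y (u (2 * j + 1)) ∧ R z (u (2 * j + 1)) := by
    intro j
    induction j with
    | zero =>
      intro _
      refine ⟨w₁, w₂s, hw12, ?_, ?_⟩
      · simpa [hu1] using (hs1 w₂).2 (Or.inr rfl)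
      · simpa [hu1] using hw2
    | succ j ih =>
      intro hj
      obtain ⟨x, z, hx, hz, hn⟩ := step (2 * j) (by omega) (ih (by omega))
      have hc : R (u (2 * j + 2)) (u (2 * j + 3)) := hchain (2 * j + 2) (by omega)
      have e : x = u (2 * j + 3) := h3.1 _ (hnw (2 * j + 1) (by omega)) _ _ hx hc
      subst e
      exact ⟨_, z, hn, hc, hz⟩
  by_contra hodd
  rw [Nat.not_even_iff_odd] at hodd
  obtain ⟨m, rfl⟩ := hodd
  obtain ⟨j, rfl⟩ : ∃ j, m = j + 1 := ⟨m - 1, by omega⟩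
  obtain ⟨x, z, hx, -, -⟩ := step (2 * j) (by omega) (key j (by omega))
  exact hlast ⟨x, hx⟩
end

section
/- For every integer d ≥ 1, every even integer n ≥ 2, and every world w of the frame F_n, there exist an even integer m with 2 ≤ m ≤ d + 3 and a world w' of the frame F_m such that the subframe of F_n induced on the set of worlds reachable from w in at most d R-steps is isomorphic to the subframe of F_m induced on the set of worlds reachable from w' in at most d R-steps, via an isomorphism sending w to w'. (The induced subframe on a set X of worlds has universe X and all R-pairs between elements of X; an isomorphism is a bijection preserving the relation in both directions.) -/
/-- `Reach R d w v` : `v` is reachable from `w` in at most `d` `R`-steps. -/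
def Reach {W : Type*} (R : W → W → Prop) (d : ℕ) (w v : W) : Prop :=
  ∃ k, k ≤ d ∧ pathRel R k w v

theorem path_inr_s14 (n k : ℕ) (v : Fin n ⊕ Unit) :
    pathRel (Frel n) k (Sum.inr ()) v ↔ k = 0 ∧ v = Sum.inr () := by
  cases k with
  | zero => simp [pathRel, eq_comm]
  | succ k => simp [pathRel, Frel]

theorem path_inl_inl (n k : ℕ) (i j : Fin n) :
    pathRel (Frel n) k (Sum.inl i) (Sum.inl j) ↔ (j : ℕ) = i + k := by
  induction k generalizing i with
  | zero => simp [pathRel, Fin.ext_iff, eq_comm]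
  | succ k ih =>
    constructor
    · rintro ⟨u | u, h1, h2⟩
      · rw [ih] at h2
        simp only [Frel] at h1
        omega
      · have := (path_inr_s14 n k _).1 h2
        simp at this
    · intro h
      have hj := j.2
      refine ⟨Sum.inl ⟨i + 1, by omega⟩, by simp [Frel], ?_⟩
      rw [ih]
      simp only
      omega

theorem path_inl_inr (n k : ℕ) (i : Fin n) :
    pathRel (Frel n) k (Sum.inl i) (Sum.inr ()) ↔ (i : ℕ) = 0 ∧ k = 1 := by
  induction k generalizing i with
  | zero => simp [pathRel]
  | succ k ih =>
    constructor
    · rintro ⟨u | u, h1, h2⟩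
      · rw [ih] at h2
        simp only [Frel] at h1
        omega
      · have := (path_inr_s14 n k _).1 h2
        simp only [Frel] at h1
        omega
    · rintro ⟨h, hk⟩
      obtain rfl : k = 0 := by omega
      exact ⟨Sum.inr (), h, rfl⟩

theorem reach_inr (n d : ℕ) (v : Fin n ⊕ Unit) :
    Reach (Frel n) d (Sum.inr ()) v ↔ v = Sum.inr () := by
  simp [Reach, path_inr_s14]

theorem reach_inl_inl (n d : ℕ) (i j : Fin n) :
    Reach (Frel n) d (Sum.inl i) (Sum.inl j) ↔ (i : ℕ) ≤ j ∧ (j : ℕ) ≤ i + d := by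
  simp only [Reach, path_inl_inl]
  constructor
  · rintro ⟨k, h1, h2⟩
    omega
  · intro h
    exact ⟨j - i, by omega, by omega⟩

theorem reach_inl_inr (n d : ℕ) (hd : 1 ≤ d) (i : Fin n) :
    Reach (Frel n) d (Sum.inl i) (Sum.inr ()) ↔ (i : ℕ) = 0 := by
  simp only [Reach, path_inl_inr]
  constructor
  · rintro ⟨k, h1, h2⟩
    omega
  · intro h
    exact ⟨1, hd, h, rfl⟩

/-- Shift the chain by moving the base point. -/
def shiftMap (n m i i' : ℕ) : Fin n ⊕ Unit → Fin m ⊕ Unit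
  | Sum.inl j => if h : (j : ℕ) - i + i' < m then Sum.inl ⟨(j : ℕ) - i + i', h⟩ else Sum.inr ()
  | Sum.inr _ => Sum.inr ()

theorem shiftMap_inl (n m i i' : ℕ) (j : Fin n) (h : (j : ℕ) - i + i' < m) :
    shiftMap n m i i' (Sum.inl j) = Sum.inl ⟨(j : ℕ) - i + i', h⟩ := by
  simp [shiftMap, h]

theorem bound_of_reach {n m d : ℕ} {i : Fin n} {i' : Fin m}
    (h : ∀ k ≤ d, (i : ℕ) + k < n ↔ (i' : ℕ) + k < m) {j : Fin n}
    (hj : (i : ℕ) ≤ j ∧ (j : ℕ) ≤ i + d) : (j : ℕ) - i + i' < m := by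
  have := (h (j - i) (by omega)).1 (by have := j.2; omega)
  omega

theorem shiftMap_reach {n m d : ℕ} (hd : 1 ≤ d) {i : Fin n} {i' : Fin m}
    (h0 : (i : ℕ) = 0 ↔ (i' : ℕ) = 0)
    (h : ∀ k ≤ d, (i : ℕ) + k < n ↔ (i' : ℕ) + k < m) (v : Fin n ⊕ Unit)
    (hv : Reach (Frel n) d (Sum.inl i) v) :
    Reach (Frel m) d (Sum.inl i') (shiftMap n m i i' v) := by
  rcases v with j | ⟨⟩
  · rw [reach_inl_inl] at hv
    rw [shiftMap_inl _ _ _ _ _ (bound_of_reach h hv), reach_inl_inl]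
    simp only
    omega
  · rw [reach_inl_inr _ _ hd] at hv
    exact (reach_inl_inr _ _ hd _).2 (h0.1 hv)

theorem shiftMap_inv {n m d : ℕ} {i : Fin n} {i' : Fin m}
    (h : ∀ k ≤ d, (i : ℕ) + k < n ↔ (i' : ℕ) + k < m) (v : Fin n ⊕ Unit)
    (hv : Reach (Frel n) d (Sum.inl i) v) :
    shiftMap m n i' i (shiftMap n m i i' v) = v := by
  rcases v with j | ⟨⟩
  · rw [reach_inl_inl] at hv
    have hj := j.2
    rw [shiftMap_inl _ _ _ _ _ (bound_of_reach h hv), shiftMap_inl _ _ _ _ _ (by simp only; omega)]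
    congr 1
    ext
    simp only
    omega
  · rfl

theorem iso_of_shift {n m d : ℕ} (hd : 1 ≤ d) (i : Fin n) (i' : Fin m)
    (h0 : (i : ℕ) = 0 ↔ (i' : ℕ) = 0)
    (h : ∀ k ≤ d, (i : ℕ) + k < n ↔ (i' : ℕ) + k < m) :
    ∃ e : {v : Fin n ⊕ Unit // Reach (Frel n) d (Sum.inl i) v} ≃
          {v : Fin m ⊕ Unit // Reach (Frel m) d (Sum.inl i') v},
      (e ⟨Sum.inl i, ⟨0, Nat.zero_le d, rfl⟩⟩).1 = Sum.inl i' ∧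
      ∀ a b : {v : Fin n ⊕ Unit // Reach (Frel n) d (Sum.inl i) v},
        Frel n a.1 b.1 ↔ Frel m (e a).1 (e b).1 := by
  have h' : ∀ k ≤ d, (i' : ℕ) + k < m ↔ (i : ℕ) + k < n := fun k hk => (h k hk).symm
  refine ⟨⟨fun v => ⟨shiftMap n m i i' v.1, shiftMap_reach hd h0 h v.1 v.2⟩,
    fun v => ⟨shiftMap m n i' i v.1, shiftMap_reach hd h0.symm h' v.1 v.2⟩,
    fun v => Subtype.ext (shiftMap_inv h v.1 v.2),
    fun v => Subtype.ext (shiftMap_inv h' v.1 v.2)⟩, ?_, ?_⟩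
  · simp [shiftMap]
  · rintro ⟨a | ⟨⟩, ha⟩ ⟨b | ⟨⟩, hb⟩
    · rw [reach_inl_inl] at ha hb
      simp only [Equiv.coe_fn_mk]
      rw [shiftMap_inl _ _ _ _ _ (bound_of_reach h ha),
        shiftMap_inl _ _ _ _ _ (bound_of_reach h hb)]
      simp only [Frel]
      omega
    · rw [reach_inl_inl] at ha
      rw [reach_inl_inr _ _ hd] at hb
      simp only [Equiv.coe_fn_mk]
      rw [shiftMap_inl _ _ _ _ _ (bound_of_reach h ha)]
      simp only [Frel, shiftMap]
      omega
    · simp [Frel, shiftMap]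
    · simp [Frel, shiftMap]

theorem stmt14 (d : ℕ) (hd : 1 ≤ d) (n : ℕ) (hn : 2 ≤ n) (hneven : Even n)
    (w : Fin n ⊕ Unit) :
    ∃ m : ℕ, 2 ≤ m ∧ m ≤ d + 3 ∧ Even m ∧
      ∃ w' : Fin m ⊕ Unit,
        -- an isomorphism between the subframes induced on the worlds reachable
        -- in at most `d` steps from `w` (in `F_n`) and from `w'` (in `F_m`)
        ∃ e : {v : Fin n ⊕ Unit // Reach (Frel n) d w v} ≃
              {v : Fin m ⊕ Unit // Reach (Frel m) d w' v},
          (e ⟨w, ⟨0, Nat.zero_le d, rfl⟩⟩).1 = w' ∧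
          ∀ a b : {v : Fin n ⊕ Unit // Reach (Frel n) d w v},
            Frel n a.1 b.1 ↔ Frel m (e a).1 (e b).1 := by
  rcases w with i | ⟨⟩
  · have hi := i.2
    by_cases hi0 : (i : ℕ) = 0
    · by_cases hnd : n ≤ d + 3
      · exact ⟨n, hn, hnd, hneven, Sum.inl i, iso_of_shift hd i i Iff.rfl (fun _ _ => Iff.rfl)⟩
      · obtain ⟨m, hm1, hm2, hm⟩ : ∃ m, d + 2 ≤ m ∧ m ≤ d + 3 ∧ Even m := by
          rcases Nat.even_or_odd d with hh | hh
          · exact ⟨d + 2, by omega, by omega, by grind⟩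
          · exact ⟨d + 3, by omega, by omega, by grind⟩
        refine ⟨m, by omega, hm2, hm, Sum.inl ⟨0, by omega⟩, iso_of_shift hd i _ ?_ ?_⟩
        · simp [hi0]
        · intro k hk
          simp only
          omega
    · obtain ⟨L, hL⟩ : ∃ L, L = min (n - 1 - i) d := ⟨_, rfl⟩
      obtain ⟨m, hm1, hm2, hm⟩ : ∃ m, L + 2 ≤ m ∧ m ≤ L + 3 ∧ Even m := by
        rcases Nat.even_or_odd L with hh | hh
        · exact ⟨L + 2, by omega, by omega, by grind⟩
        · exact ⟨L + 3, by omega, by omega, by grind⟩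
      refine ⟨m, by omega, by omega, hm, Sum.inl ⟨m - 1 - L, by omega⟩, iso_of_shift hd i _ ?_ ?_⟩
      · simp only
        omega
      · intro k hk
        simp only
        omega
  · refine ⟨2, le_refl 2, by omega, even_two, Sum.inr (),
      ⟨fun _ => ⟨Sum.inr (), (reach_inr _ _ _).2 rfl⟩,
       fun _ => ⟨Sum.inr (), (reach_inr _ _ _).2 rfl⟩,
       fun v => Subtype.ext ((reach_inr _ _ _).1 v.2).symm,
       fun v => Subtype.ext ((reach_inr _ _ _).1 v.2).symm⟩, rfl, ?_⟩
    rintro ⟨a, ha⟩ b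
    rw [reach_inr] at ha
    subst ha
    simp [Frel]
end
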